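/- For n ≥ 1 let Gₙ = ⟨a₀, ..., aₙ | a_{i+1}(aᵢ a_{i+2}) a_{i+1}⁻¹ = (aᵢ a_{i+2})² for 0 ≤ i ≤ n−2⟩, regard G_{n−1} as the subgroup of Gₙ generated by a₀, ..., a_{n−1}, and set c = a_{n−1}. Then for every Y ∈ G_{n−1} that is not a power of c, and for all integers p, q, we have c^p Y c^q ≠ Y⁻¹ in Gₙ. -/

import Mathlib

namespace CondC

/-- The relators `a_{i+1} (aᵢ a_{i+2}) a_{i+1}⁻¹ ((aᵢ a_{i+2})²)⁻¹` for `0 ≤ i ≤ n - 2`,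
on the generators `a₀, …, aₙ`. -/
def grels (n : ℕ) : Set (FreeGroup (Fin (n + 1))) :=
  {r | ∃ (i : ℕ) (h : i + 2 ≤ n),
    r = FreeGroup.of ⟨i + 1, by omega⟩ *
        (FreeGroup.of ⟨i, by omega⟩ * FreeGroup.of ⟨i + 2, by omega⟩) *
        (FreeGroup.of ⟨i + 1, by omega⟩)⁻¹ *
        ((FreeGroup.of ⟨i, by omega⟩ * FreeGroup.of ⟨i + 2, by omega⟩) ^ 2)⁻¹}

/-- `Gₙ = ⟨a₀, …, aₙ | a_{i+1}(aᵢ a_{i+2})a_{i+1}⁻¹ = (aᵢ a_{i+2})², 0 ≤ i ≤ n-2⟩`. -/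
abbrev Gp (n : ℕ) : Type := PresentedGroup (grels n)

end CondC

namespace CondC

set_option linter.unusedSectionVars false
set_option linter.unusedSimpArgs false

section Free

variable {I : Type} [DecidableEq I]

/-- Finitely supported functions on words. -/
abbrev VV (I : Type) : Type := List I →₀ ℚ

/-- Left multiplication by the letter `i` (with `i * i = 0`). -/
noncomputable def opX (i : I) : Module.End ℚ (VV I) :=
  Finsupp.linearCombination ℚ
    (fun w : List I => if w.head? = some i then (0 : VV I) else Finsupp.single (i :: w) 1)

/-- Right multiplication by the word `v`. -/
noncomputable def opR (v : List I) : Module.End ℚ (VV I) :=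
  Finsupp.linearCombination ℚ
    (fun w : List I => if w.getLast? ≠ none ∧ w.getLast? = v.head? then (0 : VV I)
      else Finsupp.single (w ++ v) 1)

lemma opX_single (i : I) (w : List I) :
    opX i (Finsupp.single w 1) = if w.head? = some i then 0 else Finsupp.single (i :: w) 1 := by
  simp [opX]

lemma opR_single (v w : List I) :
    opR v (Finsupp.single w 1) = if w.getLast? ≠ none ∧ w.getLast? = v.head? then 0
      else Finsupp.single (w ++ v) 1 := by
  simp only [opR, Finsupp.linearCombination_single, one_smul]

lemma end_ext {T S : Module.End ℚ (VV I)}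
    (h : ∀ w, T (Finsupp.single w 1) = S (Finsupp.single w 1)) : T = S := by
  apply Finsupp.lhom_ext
  intro w c
  have : Finsupp.single w c = c • (Finsupp.single w 1 : VV I) := by simp
  rw [this, map_smul, map_smul, h]

lemma opX_sq (i : I) : opX i * opX i = 0 := by
  apply end_ext
  intro w
  rw [Module.End.mul_apply, opX_single]
  split_ifs
  · simp
  · rw [opX_single]; simp

lemma opX_opR (i : I) (v : List I) : opX i * opR v = opR v * opX i := by
  apply end_ext
  intro w
  rw [Module.End.mul_apply, Module.End.mul_apply, opX_single, opR_single]
  cases w with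
  | nil =>
    simp only [List.getLast?_nil, ne_eq, not_true_eq_false, false_and, if_false, List.nil_append,
      List.head?_nil]
    rw [opX_single]
    simp only [reduceCtorEq, if_false]
    rw [opR_single]
    simp [eq_comm]
  | cons j w =>
    by_cases h1 : (j :: w).getLast? ≠ none ∧ (j :: w).getLast? = v.head?
    · rw [if_pos h1]
      split_ifs with h2
      · simp
      · rw [opR_single, if_pos]
        · simp
        · simpa using h1
    · rw [if_neg h1, opX_single]
      by_cases h2 : j = i
      · simp [h2]
      · have h3 : ¬ ((i :: j :: w).getLast? ≠ none ∧ (i :: j :: w).getLast? = v.head?) := by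
          simpa using h1
        simp only [List.cons_append, List.head?_cons, Option.some.injEq, h2, if_false]
        rw [opR_single, if_neg h3]
        simp

lemma opX_apply_nil (i : I) (f : VV I) : opX i f [] = 0 := by
  induction f using Finsupp.induction_linear with
  | zero => simp
  | add f g hf hg => simp [hf, hg]
  | single w c =>
    have : Finsupp.single w c = c • (Finsupp.single w 1 : VV I) := by simp
    rw [this, map_smul, opX_single]
    split_ifs <;> simp

lemma opX_apply_cons (i : I) (f : VV I) (j : I) (u : List I) :
    opX i f (j :: u) = if i = j ∧ u.head? ≠ some i then f u else 0 := by
  induction f using Finsupp.induction_linear with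
  | zero => simp
  | add f g hf hg =>
    rw [map_add, Finsupp.add_apply, hf, hg]
    split_ifs <;> simp
  | single w c =>
    have : Finsupp.single w c = c • (Finsupp.single w 1 : VV I) := by simp
    rw [this, map_smul, opX_single]
    by_cases hw : w = u
    · subst hw
      by_cases h1 : w.head? = some i <;> by_cases h2 : i = j <;> simp [h1, h2, Finsupp.single_apply]
      grind
    · split_ifs <;> simp [Finsupp.single_apply, hw]

/-- `1 + x X_i`. -/
noncomputable def opE (i : I) (x : ℚ) : Module.End ℚ (VV I) := 1 + x • opX i

lemma opE_mul (i : I) (x y : ℚ) : opE i x * opE i y = opE i (x + y) := by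
  simp only [opE, mul_add, add_mul, one_mul, mul_one, smul_mul_smul_comm, opX_sq, smul_zero, add_smul]
  abel

/-- Functions supported on words of length at least `d`. -/
def filt (I : Type) (d : ℕ) : Submodule ℚ (VV I) where
  carrier := {f | ∀ w : List I, w.length < d → f w = 0}
  add_mem' := by
    intro f g hf hg w hw
    simp [hf w hw, hg w hw]
  zero_mem' := by intro w _; simp
  smul_mem' := by
    intro c f hf w hw
    simp [hf w hw]

lemma mem_filt {d : ℕ} {f : VV I} : f ∈ filt I d ↔ ∀ w : List I, w.length < d → f w = 0 := Iff.rfl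

lemma filt_mono {d e : ℕ} (h : d ≤ e) {f : VV I} (hf : f ∈ filt I e) : f ∈ filt I d :=
  fun w hw => hf w (by omega)

lemma single_mem_filt {d : ℕ} (w : List I) (c : ℚ) (h : d ≤ w.length) :
    Finsupp.single w c ∈ filt I d := by
  intro u hu
  rw [Finsupp.single_apply, if_neg]
  rintro rfl
  omega

/-- `T` raises degree by at least `e`. -/
def DegGE (T : Module.End ℚ (VV I)) (e : ℕ) : Prop :=
  ∀ w : List I, T (Finsupp.single w 1) ∈ filt I (w.length + e)

lemma DegGE.map {T : Module.End ℚ (VV I)} {e : ℕ} (hT : DegGE T e) {d : ℕ} {f : VV I}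
    (hf : f ∈ filt I d) : T f ∈ filt I (d + e) := by
  have h1 : T f = f.sum (fun w c => c • T (Finsupp.single w 1)) := by
    conv_lhs => rw [← Finsupp.sum_single f]
    rw [Finsupp.sum, map_sum, Finsupp.sum]
    refine Finset.sum_congr rfl fun w _ => ?_
    rw [← map_smul]; simp
  rw [h1, Finsupp.sum]
  refine Submodule.sum_mem _ fun w hw => Submodule.smul_mem _ _ ?_
  refine filt_mono ?_ (hT w)
  by_contra h
  exact (Finsupp.mem_support_iff.mp hw) (hf w (by omega))

lemma DegGE.mul {T S : Module.End ℚ (VV I)} {e e' : ℕ} (hT : DegGE T e) (hS : DegGE S e') :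
    DegGE (T * S) (e + e') := by
  intro w
  rw [Module.End.mul_apply]
  exact filt_mono (by omega) (hT.map (hS w))

lemma DegGE.add {T S : Module.End ℚ (VV I)} {e : ℕ} (hT : DegGE T e) (hS : DegGE S e) :
    DegGE (T + S) e := fun w => by
  rw [LinearMap.add_apply]; exact Submodule.add_mem _ (hT w) (hS w)

lemma DegGE.mono {T : Module.End ℚ (VV I)} {e e' : ℕ} (hT : DegGE T e) (h : e' ≤ e) :
    DegGE T e' := fun w => filt_mono (by omega) (hT w)

lemma DegGE.smul {T : Module.End ℚ (VV I)} {e : ℕ} (hT : DegGE T e) (c : ℚ) :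
    DegGE (c • T) e := fun w => by
  rw [LinearMap.smul_apply]; exact Submodule.smul_mem _ _ (hT w)

lemma DegGE.one : DegGE (1 : Module.End ℚ (VV I)) 0 := fun w => by
  simpa using single_mem_filt w 1 le_rfl

lemma DegGE.opX (i : I) : DegGE (opX i) 1 := fun w => by
  rw [opX_single]
  split_ifs
  · exact Submodule.zero_mem _
  · exact single_mem_filt _ _ (by simp)

lemma DegGE.opR (v : List I) : DegGE (opR v) v.length := fun w => by
  rw [opR_single]
  split_ifs
  · exact Submodule.zero_mem _
  · exact single_mem_filt _ _ (by simp)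

/-- An operator commuting with right multiplications has its degree read off the empty word. -/
lemma DegGE.of_nil {T : Module.End ℚ (VV I)} (hc : ∀ v, T * CondC.opR v = CondC.opR v * T) {d : ℕ}
    (h : T (Finsupp.single [] 1) ∈ filt I d) : DegGE T d := fun w => by
  have h1 : (Finsupp.single w 1 : VV I) = CondC.opR w (Finsupp.single [] 1) := by
    rw [opR_single]; simp
  rw [h1, ← Module.End.mul_apply, hc, Module.End.mul_apply]
  exact filt_mono (by omega) ((DegGE.opR w).map h)

end Free

section Act

variable {A : Type} [Group A] {I : Type} [MulAction A I]

/-- The weight `2 ^ χ(a)`. -/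
noncomputable def wt (χ : A →* Multiplicative ℤ) (a : A) : ℚ := (2 : ℚ) ^ (Multiplicative.toAdd (χ a))

lemma wt_pos (χ : A →* Multiplicative ℤ) (a : A) : 0 < wt χ a := by
  unfold wt; positivity

lemma wt_one (χ : A →* Multiplicative ℤ) : wt χ 1 = 1 := by simp [wt]

lemma wt_mul (χ : A →* Multiplicative ℤ) (a b : A) : wt χ (a * b) = wt χ a * wt χ b := by
  simp [wt, zpow_add₀]

/-- The weighted action of `A` on words. -/
noncomputable def opA (I : Type) [MulAction A I] (χ : A →* Multiplicative ℤ) :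
    A →* Module.End ℚ (VV I) where
  toFun a := Finsupp.linearCombination ℚ
    (fun w : List I => (Finsupp.single (w.map (a • ·)) (wt χ a ^ w.length) : VV I))
  map_one' := by
    classical
    apply end_ext
    intro w
    simp [wt_one]
  map_mul' a b := by
    classical
    apply end_ext
    intro w
    simp [wt_mul, mul_pow, mul_smul, mul_comm, Function.comp_def]

lemma opA_single (χ : A →* Multiplicative ℤ) (a : A) (w : List I) :
    opA I χ a (Finsupp.single w 1) = Finsupp.single (w.map (a • ·)) (wt χ a ^ w.length) := by
  simp [opA]

lemma opA_apply (χ : A →* Multiplicative ℤ) (a : A) (f : VV I) (w : List I) :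
    opA I χ a f (w.map (a • ·)) = wt χ a ^ w.length * f w := by
  classical
  induction f using Finsupp.induction_linear with
  | zero => simp
  | add f g hf hg => simp [hf, hg, mul_add]
  | single u c =>
    have : Finsupp.single u c = c • (Finsupp.single u 1 : VV I) := by simp
    rw [this, map_smul, opA_single]
    have hinj : Function.Injective (List.map (fun i : I => a • i)) :=
      List.map_injective_iff.mpr (MulAction.injective a)
    by_cases h : u = w
    · subst h; simp [mul_comm]
    · have h' : ¬ (u.map (fun i : I => a • i) = w.map (fun i : I => a • i)) := fun e => h (hinj e)
      simp [Finsupp.single_apply, h, h']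

lemma DegGE.opA (χ : A →* Multiplicative ℤ) (a : A) : DegGE (opA I χ a) 0 := fun w => by
  classical
  rw [opA_single]
  exact single_mem_filt _ _ (by simp)

lemma opA_opX [DecidableEq I] (χ : A →* Multiplicative ℤ) (a : A) (i : I) :
    opA I χ a * opX i = wt χ a • (opX (a • i) * opA I χ a) := by
  apply end_ext
  intro w
  rw [LinearMap.smul_apply, Module.End.mul_apply, Module.End.mul_apply, opX_single, opA_single]
  have : (Finsupp.single (w.map (a • ·)) (wt χ a ^ w.length) : VV I) =
    (wt χ a ^ w.length) • Finsupp.single (w.map (a • ·)) 1 := by simp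
  rw [this, map_smul, opX_single]
  have h : (w.map (a • ·)).head? = some (a • i) ↔ w.head? = some i := by
    cases w <;> simp
  by_cases h' : w.head? = some i
  · simp only [h, h', if_true]; simp
  · simp only [h, h', if_false]; rw [opA_single]; simp [pow_succ, mul_comm]

lemma opA_opE [DecidableEq I] (χ : A →* Multiplicative ℤ) (a : A) (i : I) (x : ℚ) :
    opA I χ a * opE i x * opA I χ a⁻¹ = opE (a • i) (x * wt χ a) := by
  have h1 : opA I χ a * opA I χ a⁻¹ = 1 := by rw [← map_mul]; simp
  simp only [opE, mul_add, add_mul, mul_one, mul_smul_comm, opA_opX, smul_mul_assoc, mul_assoc, h1,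
    mul_smul]

end Act

section Main

lemma map_self_iff {α : Type} (f : α → α) (l : List α) : l.map f = l ↔ ∀ x ∈ l, f x = x := by
  induction l with
  | nil => simp
  | cons a l ih => simp [ih]

variable {A G : Type} [Group A] [Group G]

/-- The subgroup of conjugates of powers of `t` attached to the coset `i`. -/
def NN (s : A) (ι : A →* G) (t : G) (rel : ι s * t * (ι s)⁻¹ = t ^ 2)
    (i : A ⧸ Subgroup.zpowers s) : Subgroup G where
  carrier := {n | ∃ (g : A) (b : ℤ), (g : A ⧸ Subgroup.zpowers s) = i ∧ n = ι g * t ^ b * (ι g)⁻¹}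
  one_mem' := by
    obtain ⟨g, hg⟩ := QuotientGroup.mk_surjective i
    exact ⟨g, 0, hg, by simp⟩
  inv_mem' := by
    rintro _ ⟨g, b, hg, rfl⟩
    exact ⟨g, -b, hg, by simp [mul_assoc]⟩
  mul_mem' := by
    have h1 : ∀ (b : ℤ), ι s * t ^ b * (ι s)⁻¹ = t ^ (2 * b) := by
      intro b
      rw [← conj_zpow, rel, ← zpow_natCast, ← zpow_mul]; rfl
    have h2 : ∀ (k : ℕ) (b : ℤ), ∃ b' : ℤ, ι s ^ k * t ^ b * (ι s ^ k)⁻¹ = t ^ b' := by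
      intro k
      induction k with
      | zero => intro b; exact ⟨b, by simp⟩
      | succ k ih =>
        intro b
        obtain ⟨b', hb'⟩ := ih (2 * b)
        refine ⟨b', ?_⟩
        rw [← hb', ← h1, pow_succ]
        group
    have h3 : ∀ (g : A) (k : ℕ) (b : ℤ), ∃ b' : ℤ,
        ι (g * s ^ k) * t ^ b * (ι (g * s ^ k))⁻¹ = ι g * t ^ b' * (ι g)⁻¹ := by
      intro g k b
      obtain ⟨b', hb'⟩ := h2 k b
      refine ⟨b', ?_⟩
      rw [← hb', map_mul, map_pow]
      group
    rintro _ _ ⟨g, b, hg, rfl⟩ ⟨g', b', hg', rfl⟩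
    obtain ⟨l, hl⟩ := Subgroup.mem_zpowers_iff.mp (QuotientGroup.eq.mp (hg.trans hg'.symm))
    obtain ⟨k, rfl | rfl⟩ := l.eq_nat_or_neg
    · obtain rfl : g' = g * s ^ k := by rw [← zpow_natCast, hl]; group
      obtain ⟨b'', hb''⟩ := h3 g k b'
      refine ⟨g, b + b'', hg, ?_⟩
      rw [hb'', zpow_add]; group
    · obtain rfl : g = g' * s ^ k := by
        have h4 : g' = g * s ^ (-(k : ℤ)) := by rw [hl]; group
        rw [h4, zpow_neg, zpow_natCast]; group
      obtain ⟨b'', hb''⟩ := h3 g' k b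
      refine ⟨g', b'' + b', hg', ?_⟩
      rw [hb'', zpow_add]; group

/-- Uniqueness of square roots is inherited by `⟨A, t | s t s⁻¹ = t²⟩`. -/
theorem unique_sqrt (s : A) (χ : A →* Multiplicative ℤ) (hχ : χ s = Multiplicative.ofAdd 1)
    (hA : ∀ x y : A, x * x = y * y → x = y) (ι : A →* G) (t : G)
    (rel : ι s * t * (ι s)⁻¹ = t ^ 2)
    (gen : Subgroup.closure (Set.range ι ∪ {t}) = ⊤)
    (univ : ∀ (L : Type) [Group L] (f : A →* L) (u : L), f s * u * (f s)⁻¹ = u ^ 2 →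
      ∃ φ : G →* L, (∀ a, φ (ι a) = f a) ∧ φ t = u) :
    ∀ x y : G, x * x = y * y → x = y := by
  classical
  -- the retraction
  obtain ⟨r, hrι, hrt⟩ := univ A (MonoidHom.id A) 1 (by simp)
  simp only [MonoidHom.id_apply] at hrι
  -- the representation
  obtain ⟨ρ, hρA, i0, hi0, hρt⟩ : ∃ ρ : G →* Module.End ℚ (VV (A ⧸ Subgroup.zpowers s)),
      (∀ a, ρ (ι a) = opA _ χ a) ∧ ∃ i0 : A ⧸ Subgroup.zpowers s, i0 = ((1 : A) : A ⧸ Subgroup.zpowers s) ∧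
        ∀ b : ℤ, ρ (t ^ b) = opE i0 b := by
    set i0 : A ⧸ Subgroup.zpowers s := ((1 : A) : A ⧸ Subgroup.zpowers s) with hi0
    have hE0 : opE i0 0 = 1 := by simp [opE]
    let E : Multiplicative ℤ →* Module.End ℚ (VV (A ⧸ Subgroup.zpowers s)) :=
      { toFun := fun b => opE i0 ((Multiplicative.toAdd b : ℤ) : ℚ)
        map_one' := by simp [hE0]
        map_mul' := fun a b => by simp [opE_mul] }
    obtain ⟨φ, h1, h2⟩ := univ (Module.End ℚ (VV (A ⧸ Subgroup.zpowers s)))ˣ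
      (opA _ χ).toHomUnits (E.toHomUnits (Multiplicative.ofAdd 1)) (by
        apply Units.ext
        rw [← map_inv]
        simp only [Units.val_mul, MonoidHom.coe_toHomUnits, Units.val_pow_eq_pow_val, E,
          MonoidHom.coe_mk, OneHom.coe_mk, opA_opE, sq, opE_mul]
        have hs : s • i0 = i0 := by
          rw [hi0]
          change ((s * 1 : A) : A ⧸ Subgroup.zpowers s) = _
          rw [QuotientGroup.eq]; simp
        rw [hs]
        simp [wt, hχ]
        norm_num)
    refine ⟨(Units.coeHom _).comp φ, fun a => ?_, i0, rfl, fun b => ?_⟩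
    · simp [h1]
    · have : φ (t ^ b) = E.toHomUnits (Multiplicative.ofAdd b) := by
        rw [map_zpow, h2, ← map_zpow]; congr 1
        simp [← ofAdd_zsmul]
      simp [this, E]
  let N : (A ⧸ Subgroup.zpowers s) → Subgroup G := NN s ι t rel
  have hN : ∀ i (n : N i), ∃ x : ℚ, ρ n = opE i x ∧ (x = 0 → n = 1) ∧ r n = 1 := by
    rintro i ⟨_, g, b, hg, rfl⟩
    refine ⟨b * wt χ g, ?_, ?_, ?_⟩
    · change ρ (ι g * t ^ b * (ι g)⁻¹) = _
      rw [← map_inv]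
      simp only [map_mul, hρA, hρt, opA_opE]
      rw [← hg, hi0]
      congr 1
      change ((g * 1 : A) : (A ⧸ Subgroup.zpowers s)) = _
      simp
    · intro h
      have : b = 0 := by
        have := (wt_pos χ g).ne'
        simpa [this] using h
      subst this
      apply Subtype.ext
      simp
    · simp [hrι, hrt]
  let Λ : Monoid.CoprodI (fun i => N i) →* G := Monoid.CoprodI.lift (fun i => (N i).subtype)
  have hΛof : ∀ i (n : N i), Λ (Monoid.CoprodI.of n) = n := fun i n => by simp [Λ]
  have hrΛ : ∀ y, r (Λ y) = 1 := by
    intro y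
    induction y using Monoid.CoprodI.induction_left with
    | one => simp
    | mul m x ih =>
      obtain ⟨_, _, _, h⟩ := hN _ m
      rw [map_mul, map_mul, ih, hΛof, h, one_mul]
  have hconj : ∀ (a : A) y, ∃ z, ι a * Λ y = Λ z * ι a := by
    intro a y
    induction y using Monoid.CoprodI.induction_left with
    | one => exact ⟨1, by simp⟩
    | @mul i m x ih =>
      obtain ⟨z, hz⟩ := ih
      obtain ⟨m', g, b, hg, rfl⟩ := m
      refine ⟨Monoid.CoprodI.of (i := a • i)
        (⟨ι (a * g) * t ^ b * (ι (a * g))⁻¹, a * g, b, by rw [← hg]; rfl, rfl⟩ : N (a • i)) * z, ?_⟩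
      rw [map_mul, map_mul, hΛof, hΛof, mul_assoc _ (Λ z), ← hz]
      simp [mul_assoc]
  have htmem : ∀ b : ℤ, ∃ z, t ^ b = Λ z := fun b =>
    ⟨Monoid.CoprodI.of (i := i0) (⟨t ^ b, 1, b, hi0.symm, by simp⟩ : N i0), by rw [hΛof]⟩
  have hdec : ∀ x : G, ∃ z a, x = Λ z * ι a := by
    intro x
    have hx : x ∈ Subgroup.closure (Set.range ι ∪ {t}) := by rw [gen]; trivial
    induction hx using Subgroup.closure_induction_left with
    | one => exact ⟨1, 1, by simp⟩
    | mul_left x hx y _ ih =>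
      obtain ⟨z, a, rfl⟩ := ih
      rcases hx with ⟨b, rfl⟩ | rfl
      · obtain ⟨z', hz'⟩ := hconj b z
        exact ⟨z', b * a, by rw [← mul_assoc, hz', map_mul, mul_assoc]⟩
      · obtain ⟨z', hz'⟩ := htmem 1
        exact ⟨z' * z, a, by rw [map_mul, ← hz', zpow_one, mul_assoc]⟩
    | inv_mul_cancel x hx y _ ih =>
      obtain ⟨z, a, rfl⟩ := ih
      rcases hx with ⟨b, rfl⟩ | rfl
      · obtain ⟨z', hz'⟩ := hconj b⁻¹ z
        exact ⟨z', b⁻¹ * a, by rw [← mul_assoc, ← map_inv, hz', map_mul, mul_assoc]⟩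
      · obtain ⟨z', hz'⟩ := htmem (-1)
        exact ⟨z' * z, a, by rw [map_mul, ← hz', zpow_neg_one, mul_assoc]⟩
  have hdeg : ∀ z, DegGE (ρ (Λ z) - 1) 1 ∧ ∀ v, ρ (Λ z) * opR v = opR v * ρ (Λ z) := by
    intro z
    induction z using Monoid.CoprodI.induction_left with
    | one =>
      refine ⟨fun w => ?_, fun v => by simp⟩
      simp
    | @mul i m x ih =>
      obtain ⟨q, hq, _, _⟩ := hN _ m
      rw [map_mul, map_mul, hΛof, hq]
      refine ⟨?_, fun v => ?_⟩
      · have : opE i q * ρ (Λ x) - 1 = (ρ (Λ x) - 1) + (q • opX i * (ρ (Λ x) - 1) + q • opX i) := by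
          simp only [opE, add_mul, one_mul, mul_sub, mul_one]; abel
        rw [this]
        exact ih.1.add (((((DegGE.opX i).smul q).mul ih.1).mono (by omega)).add ((DegGE.opX i).smul q))
      · have h1 : opE i q * opR v = opR v * opE i q := by
          simp only [opE, add_mul, mul_add, smul_mul_assoc, mul_smul_comm, opX_opR, one_mul, mul_one]
        rw [mul_assoc, ih.2, ← mul_assoc, h1, mul_assoc]
  -- faithfulness
  have hfaith : ∀ z, ρ (Λ z) (Finsupp.single [] 1) = Finsupp.single [] 1 → z = 1 := by
    have key : ∀ w : Monoid.CoprodI.Word (fun i => N i),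
        ρ (Λ w.prod) (Finsupp.single [] 1) (w.toList.map Sigma.fst) ≠ 0 ∧
        ∀ u : List (A ⧸ Subgroup.zpowers s), w.toList.length < u.length →
          ρ (Λ w.prod) (Finsupp.single [] 1) u = 0 := by
      intro w
      induction w using Monoid.CoprodI.Word.consRecOn with
      | empty =>
        refine ⟨by
          rw [Monoid.CoprodI.Word.prod_empty, map_one, map_one, Module.End.one_apply]
          simp [Monoid.CoprodI.Word.empty], fun u hu => ?_⟩
        rw [Monoid.CoprodI.Word.prod_empty, map_one, map_one, Module.End.one_apply,
          Finsupp.single_apply, if_neg]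
        rintro rfl
        simp at hu
      | cons i m w h1 h2 ih =>
        obtain ⟨q, hq, hq0, _⟩ := hN _ m
        have hq1 : q ≠ 0 := fun h => h2 (hq0 h)
        rw [Monoid.CoprodI.Word.prod_cons, map_mul, map_mul, hΛof, hq, Module.End.mul_apply]
        set f := ρ (Λ w.prod) (Finsupp.single [] 1) with hf
        have hl : (Monoid.CoprodI.Word.cons (M := fun i => N i) m w h1 h2).toList = ⟨i, m⟩ :: w.toList := rfl
        have hE : ∀ u, opE i q f u = f u + q * opX i f u := fun u => by simp [opE]
        rw [hl]
        refine ⟨?_, fun u hu => ?_⟩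
        · rw [hE, List.map_cons, opX_apply_cons, ih.2 _ (by simp), if_pos, zero_add]
          · exact mul_ne_zero hq1 ih.1
          · refine ⟨rfl, ?_⟩
            simpa [Monoid.CoprodI.Word.fstIdx, List.head?_map] using h1
        · rw [hE, ih.2 u (by simp at hu; omega), zero_add]
          cases u with
          | nil => simp at hu
          | cons j u =>
            rw [opX_apply_cons]
            split_ifs
            · rw [ih.2 u (by simpa using hu), mul_zero]
            · simp
    intro z hz
    obtain ⟨w, rfl⟩ : ∃ w : Monoid.CoprodI.Word (fun i => N i), w.prod = z :=
      ⟨Monoid.CoprodI.Word.equiv z, Monoid.CoprodI.Word.equiv.symm_apply_apply z⟩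
    have h := (key w).1
    rw [hz, Finsupp.single_apply] at h
    have h' : ([] : List (A ⧸ Subgroup.zpowers s)) = w.toList.map Sigma.fst := by
      by_contra hne; exact h (if_neg hne)
    have hnil : w.toList = [] := by simpa using h'.symm
    simp [Monoid.CoprodI.Word.prod, hnil]
  -- the main argument
  intro x y hxy
  obtain ⟨z1, α, hx⟩ := hdec x
  obtain ⟨z2, β, hy⟩ := hdec y
  have hrx : r x = α := by rw [hx, map_mul, hrΛ, hrι, one_mul]
  have hry : r y = β := by rw [hy, map_mul, hrΛ, hrι, one_mul]
  have hαβ : α = β := by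
    apply hA
    rw [← hrx, ← hry, ← map_mul, ← map_mul, hxy]
  subst hαβ
  by_contra hne
  have hκ : Λ (z1 * z2⁻¹) * y = x := by rw [hx, hy, map_mul, map_inv]; group
  have hκ1 : z1 * z2⁻¹ ≠ 1 := by
    intro h; rw [h] at hκ; simp at hκ; exact hne hκ.symm
  obtain ⟨κ, hκdef⟩ : ∃ κ, κ = z1 * z2⁻¹ := ⟨_, rfl⟩
  rw [← hκdef] at hκ hκ1
  have hrel : Λ κ * y * Λ κ = y := by
    have : Λ κ * y * Λ κ * y = y * y := by
      rw [mul_assoc _ (Λ κ), hκ, hxy]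
    exact mul_right_cancel this
  obtain ⟨T, hT⟩ : ∃ T, T = ρ (Λ κ) - 1 := ⟨_, rfl⟩
  obtain ⟨S, hS⟩ : ∃ S, S = ρ (Λ z2) - 1 := ⟨_, rfl⟩
  have hS1 : DegGE S 1 := by rw [hS]; exact (hdeg z2).1
  have hT1 : DegGE T 1 := by rw [hT]; exact (hdeg κ).1
  have hTR : ∀ v, T * opR v = opR v * T := by
    intro v; rw [hT, sub_mul, mul_sub, (hdeg κ).2, one_mul, mul_one]
  set e : VV (A ⧸ Subgroup.zpowers s) := Finsupp.single [] 1 with he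
  have hTe : T e ≠ 0 := by
    intro h
    apply hκ1; apply hfaith
    rw [hT, LinearMap.sub_apply, sub_eq_zero] at h
    simpa using h
  obtain ⟨f, hf⟩ : ∃ f, f = T e := ⟨_, rfl⟩
  -- lowest degree
  have hex : ∃ d, ∃ w : List (A ⧸ Subgroup.zpowers s), w.length = d ∧ f w ≠ 0 := by
    rw [← hf] at hTe
    obtain ⟨w, hw⟩ := Finsupp.ne_iff.mp hTe
    exact ⟨_, w, rfl, by simpa using hw⟩
  obtain ⟨d, ⟨w0, hw0, hfw0⟩, hmin⟩ : ∃ d, (∃ w : List (A ⧸ Subgroup.zpowers s), w.length = d ∧ f w ≠ 0) ∧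
      ∀ w : List (A ⧸ Subgroup.zpowers s), w.length < d → f w = 0 := by
    refine ⟨Nat.find hex, Nat.find_spec hex, fun w hw => ?_⟩
    by_contra h
    exact Nat.find_min hex hw ⟨w, rfl, h⟩
  have hTd : DegGE T d := DegGE.of_nil hTR (by rw [← he, ← hf]; exact hmin)
  have hd1 : 1 ≤ d := by
    by_contra h
    have h2 := hT1 [] w0 (by rw [hw0]; simp; omega)
    rw [← he, ← hf] at h2
    exact hfw0 h2
  obtain ⟨P, hP⟩ : ∃ P, P = opA (A ⧸ Subgroup.zpowers s) χ α := ⟨_, rfl⟩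
  have hP0 : DegGE P 0 := by rw [hP]; exact DegGE.opA χ α
  have hop : (T * P + P * T) + (T * S * P + (S * P * T + T * ((1 + S) * P) * T)) = 0 := by
    have h1 := congrArg ρ hrel
    rw [hy] at h1
    simp only [map_mul, hρA] at h1
    have e1 : ρ (Λ κ) = 1 + T := by rw [hT]; abel
    have e2 : ρ (Λ z2) = 1 + S := by rw [hS]; abel
    rw [e1, e2, ← hP] at h1
    have h2 := sub_eq_zero.mpr h1
    rw [← h2]
    noncomm_ring
  have hrest : DegGE (T * S * P + (S * P * T + T * ((1 + S) * P) * T)) (d + 1) := by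
    refine DegGE.add ?_ (DegGE.add ?_ ?_)
    · exact ((hTd.mul hS1).mul hP0).mono (by omega)
    · exact ((hS1.mul hP0).mul hTd).mono (by omega)
    · exact ((hTd.mul ((DegGE.one.add (hS1.mono (by omega))).mul hP0)).mul hTd).mono (by omega)
  have hPe : P e = e := by rw [hP, he, opA_single]; simp
  have hfd : f + P f ∈ filt (A ⧸ Subgroup.zpowers s) (d + 1) := by
    have h1 := hrest []
    have h2 := congrArg (fun Q => Q e) hop
    simp only [LinearMap.add_apply _ _ e] at h2
    rw [← he] at h1
    rw [LinearMap.add_apply, LinearMap.add_apply] at h1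
    have h3 : f + P f = (T * P) e + (P * T) e := by
      rw [Module.End.mul_apply, Module.End.mul_apply, hPe, hf]
    have h4 := eq_neg_of_add_eq_zero_left h2
    rw [h3, h4]
    exact Submodule.neg_mem _ (filt_mono (by simp) h1)
  have hstep : ∀ w : List (A ⧸ Subgroup.zpowers s), w.length = d → f (w.map (α • ·)) = -(wt χ α ^ d) * f w := by
    intro w hw
    have h1 := hfd (w.map (α • ·)) (by simp [hw])
    rw [Finsupp.add_apply, hP, opA_apply, hw] at h1
    linarith
  have hiter : ∀ n : ℕ, f (w0.map (α ^ n • ·)) = (-(wt χ α ^ d)) ^ n * f w0 := by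
    intro n
    induction n with
    | zero => simp
    | succ n ih =>
      have h1 := hstep (w0.map (α ^ n • ·)) (by simp [hw0])
      rw [ih, List.map_map] at h1
      rw [pow_succ' (-(wt χ α ^ d)), mul_assoc, ← h1]
      congr 2
      funext i
      simp [pow_succ', mul_smul]
  -- no periods
  have hsq : ∀ (u : A) (i : (A ⧸ Subgroup.zpowers s)), (u * u) • i = i → u • i = i := by
    intro u i h
    obtain ⟨g, rfl⟩ := QuotientGroup.mk_surjective i
    change ((u * u * g : A) : (A ⧸ Subgroup.zpowers s)) = (g : (A ⧸ Subgroup.zpowers s)) at h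
    have h1 := QuotientGroup.eq.mp h.symm
    obtain ⟨l, hl⟩ := Subgroup.mem_zpowers_iff.mp h1
    have h2 : s ^ l = (g⁻¹ * u * g) * (g⁻¹ * u * g) := by rw [hl]; group
    have h3 : l = 2 * Multiplicative.toAdd (χ (g⁻¹ * u * g)) := by
      have := congrArg (fun a => Multiplicative.toAdd (χ a)) h2
      simp only [map_zpow, map_mul χ (g⁻¹ * u * g), hχ, toAdd_zpow, toAdd_ofAdd, toAdd_mul] at this
      simp only [smul_eq_mul, mul_one] at this
      omega
    obtain ⟨l', hl'⟩ : ∃ l', l = l' + l' := ⟨_, h3.trans (two_mul _)⟩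
    rw [hl', zpow_add] at h2
    have h4 := hA _ _ h2
    change ((u * g : A) : (A ⧸ Subgroup.zpowers s)) = (g : (A ⧸ Subgroup.zpowers s))
    symm
    rw [QuotientGroup.eq, ← mul_assoc, ← h4]
    exact Subgroup.zpow_mem_zpowers s l'
  have hnoper : ∀ n : ℕ, 1 ≤ n → w0.map (α ^ n • ·) ≠ w0 := by
    intro n
    induction n using Nat.strong_induction_on with
    | _ n ih =>
      intro hn h
      rcases Nat.even_or_odd n with ⟨m, hm⟩ | hodd
      · refine ih m (by omega) (by omega) ?_
        rw [map_self_iff] at h ⊢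
        intro i hi
        apply hsq
        rw [← pow_add, ← hm]
        exact h i hi
      · have h1 := hiter n
        rw [h] at h1
        have h2 : (-(wt χ α ^ d)) ^ n < 0 := hodd.pow_neg (by
          have := pow_pos (wt_pos χ α) d
          linarith)
        have h3 : (-(wt χ α ^ d)) ^ n = 1 := by
          have : ((-(wt χ α ^ d)) ^ n - 1) * f w0 = 0 := by linarith
          rcases mul_eq_zero.mp this with h | h
          · linarith
          · exact absurd h hfw0
        linarith
  -- finite support gives a period
  have hsupp : ∀ n : ℕ, w0.map (α ^ n • ·) ∈ f.support := by
    intro n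
    rw [Finsupp.mem_support_iff, hiter]
    have := pow_pos (wt_pos χ α) d
    exact mul_ne_zero (pow_ne_zero _ (by linarith)) hfw0
  have hninj : ¬ Function.Injective (fun n : ℕ => (⟨w0.map (α ^ n • ·), hsupp n⟩ : f.support)) :=
    not_injective_infinite_finite _
  apply hninj
  have hlt : ∀ a b : ℕ, a < b → w0.map (α ^ a • ·) ≠ w0.map (α ^ b • ·) := by
    intro a b hab h
    refine hnoper (b - a) (by omega) ?_
    have hinj : Function.Injective (List.map (fun i : (A ⧸ Subgroup.zpowers s) => α ^ a • i)) :=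
      List.map_injective_iff.mpr (MulAction.injective _)
    apply hinj
    rw [h, List.map_map]
    congr 1
    funext i
    simp only [Function.comp]
    rw [← mul_smul, ← pow_add]
    congr 2; omega
  intro a b hab
  have hab' : w0.map (α ^ a • ·) = w0.map (α ^ b • ·) := congrArg Subtype.val hab
  rcases lt_trichotomy a b with h | h | h
  · exact absurd hab' (hlt a b h)
  · exact h
  · exact absurd hab'.symm (hlt b a h)

end Main

lemma rel_Gp (n i : ℕ) (h : i + 2 ≤ n) :
    (PresentedGroup.of ⟨i + 1, by omega⟩ : Gp n) *
      (PresentedGroup.of ⟨i, by omega⟩ * PresentedGroup.of ⟨i + 2, by omega⟩) *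
      (PresentedGroup.of ⟨i + 1, by omega⟩)⁻¹ =
      (PresentedGroup.of ⟨i, by omega⟩ * PresentedGroup.of ⟨i + 2, by omega⟩) ^ 2 := by
  have h1 : PresentedGroup.mk (grels n) _ = 1 := PresentedGroup.one_of_mem ⟨i, h, rfl⟩
  rw [map_mul, map_inv, mul_inv_eq_one] at h1
  simp only [map_mul, map_inv, map_pow] at h1
  exact h1

lemma hom_Gp (n : ℕ) {L : Type} [Group L] (F : ℕ → L)
    (hF : ∀ i, i + 2 ≤ n → F (i + 1) * (F i * F (i + 2)) * (F (i + 1))⁻¹ = (F i * F (i + 2)) ^ 2) :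
    ∃ φ : Gp n →* L, ∀ i (h : i < n + 1), φ (PresentedGroup.of ⟨i, h⟩) = F i := by
  have h : ∀ r ∈ grels n, FreeGroup.lift (fun i : Fin (n + 1) => F i) r = 1 := by
    rintro _ ⟨i, h, rfl⟩
    rw [map_mul, map_inv, mul_inv_eq_one]
    simpa using hF i h
  exact ⟨PresentedGroup.toGroup h, fun i hi => PresentedGroup.toGroup.of h⟩

/-- The sign pattern `1, 1, -1, -1, …`. -/
def sgn4 (i : ℕ) : ℤ := if i % 4 < 2 then 1 else -1

lemma chi_Gp (n i : ℕ) (h : i < n + 1) : ∃ χ : Gp n →* Multiplicative ℤ,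
    χ (PresentedGroup.of ⟨i, h⟩) = Multiplicative.ofAdd 1 := by
  obtain ⟨φ, hφ⟩ := hom_Gp n (fun j => Multiplicative.ofAdd (sgn4 i * sgn4 j)) (by
    intro j _
    have : sgn4 (j + 2) = - sgn4 j := by unfold sgn4; split_ifs <;> omega
    simp only [this, ← ofAdd_add]
    simp)
  refine ⟨φ, ?_⟩
  rw [hφ]
  unfold sgn4; split_ifs <;> simp

lemma base_Gp (n : ℕ) (hn : n ≤ 1) (x y : Gp n) (h : x * x = y * y) : x = y := by
  have h0 : ∀ r ∈ grels n, FreeGroup.lift (FreeGroup.of : Fin (n + 1) → _) r = 1 := by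
    rintro _ ⟨i, h, rfl⟩
    omega
  have hinv : ∀ z : Gp n, PresentedGroup.mk (grels n) (PresentedGroup.toGroup h0 z) = z := by
    intro z
    have : (PresentedGroup.mk (grels n)).comp (PresentedGroup.toGroup h0) = MonoidHom.id _ := by
      apply PresentedGroup.ext
      intro i
      simp [PresentedGroup.toGroup.of]
      rfl
    exact DFunLike.congr_fun this z
  rw [← hinv x, ← hinv y]
  congr 1
  have h1 := congrArg (PresentedGroup.toGroup h0) h
  rw [map_mul, map_mul, ← sq, ← sq] at h1
  exact IsMulTorsionFree.pow_left_injective two_ne_zero h1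

theorem sqrt_Gp : ∀ (n : ℕ) (x y : Gp n), x * x = y * y → x = y
  | 0 => base_Gp 0 (by omega)
  | 1 => base_Gp 1 (by omega)
  | m + 2 => by
    obtain ⟨χ, hχ⟩ := chi_Gp (m + 1) (m + 1) (by omega)
    obtain ⟨ι, hι⟩ := hom_Gp (m + 1)
      (fun i => if h : i < m + 3 then (PresentedGroup.of ⟨i, h⟩ : Gp (m + 2)) else 1) (by
        intro i hi
        simp only [show i < m + 3 by omega, show i + 1 < m + 3 by omega,
          show i + 2 < m + 3 by omega, dif_pos]
        exact rel_Gp (m + 2) i (by omega))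
    have hι' : ∀ i (h : i < m + 2), ι (PresentedGroup.of ⟨i, h⟩) =
        PresentedGroup.of ⟨i, by omega⟩ := by
      intro i h
      rw [hι, dif_pos]
    refine unique_sqrt (PresentedGroup.of ⟨m + 1, by omega⟩) χ hχ (sqrt_Gp (m + 1)) ι
      (PresentedGroup.of ⟨m, by omega⟩ * PresentedGroup.of ⟨m + 2, by omega⟩) ?_ ?_ ?_
    · rw [hι']
      exact rel_Gp (m + 2) m (by omega)
    · rw [eq_top_iff]
      intro x _
      apply PresentedGroup.generated_by
      rintro ⟨j, hj⟩
      set C := Subgroup.closure (Set.range ι ∪ {(PresentedGroup.of ⟨m, by omega⟩ *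
        PresentedGroup.of ⟨m + 2, by omega⟩ : Gp (m + 2))}) with hC
      have h1 : ∀ i (h : i < m + 2), (PresentedGroup.of ⟨i, by omega⟩ : Gp (m + 2)) ∈ C := by
        intro i h
        rw [← hι' i h]
        exact Subgroup.subset_closure (Or.inl ⟨_, rfl⟩)
      by_cases hj' : j < m + 2
      · exact h1 j hj'
      · obtain rfl : j = m + 2 := by omega
        have h2 : (PresentedGroup.of ⟨m, by omega⟩ *
          PresentedGroup.of ⟨m + 2, by omega⟩ : Gp (m + 2)) ∈ C :=
          Subgroup.subset_closure (Or.inr rfl)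
        exact (Subgroup.mul_mem_cancel_left C (h1 m (by omega))).mp h2
    · intro L _ f u hu
      obtain ⟨φ, hφ⟩ := hom_Gp (m + 2)
        (fun i => if h : i < m + 2 then f (PresentedGroup.of ⟨i, h⟩) else
          (f (PresentedGroup.of ⟨m, by omega⟩))⁻¹ * u) (by
          intro i hi
          by_cases h : i < m
          · simp only [show i < m + 2 by omega, show i + 1 < m + 2 by omega,
              show i + 2 < m + 2 by omega, dif_pos]
            have := congrArg f (rel_Gp (m + 1) i (by omega))
            simpa only [map_mul, map_inv, map_pow] using this
          · obtain rfl : i = m := by omega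
            simpa using hu)
      refine ⟨φ, ?_, ?_⟩
      · intro a
        have : φ.comp ι = f := by
          apply PresentedGroup.ext
          rintro ⟨i, hi⟩
          rw [MonoidHom.comp_apply, hι', hφ, dif_pos]
        exact DFunLike.congr_fun this a
      · rw [map_mul, hφ, hφ]
        simp

end CondC

open CondC in
/-- For `n ≥ 1`, regard `G_{n-1}` as the subgroup of `Gₙ` generated by `a₀, …, a_{n-1}`
and set `c = a_{n-1}`.  For every `Y` in that subgroup which is not a power of `c`, and
all integers `p, q`, we have `c^p Y c^q ≠ Y⁻¹` in `Gₙ`. -/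
theorem cp_Y_cq_ne_inv (n : ℕ) (hn : 1 ≤ n)
    (c : Gp n) (hc : c = PresentedGroup.of ⟨n - 1, by omega⟩)
    (Y : Gp n)
    (hY : Y ∈ Subgroup.closure {g : Gp n | ∃ (i : ℕ) (h : i < n),
      g = PresentedGroup.of ⟨i, by omega⟩})
    (hYc : ∀ k : ℤ, Y ≠ c ^ k) (p q : ℤ) :
    c ^ p * Y * c ^ q ≠ Y⁻¹ := by
  intro heq
  have hlt : n - 1 < n + 1 := by omega
  obtain ⟨χ, hχ⟩ := chi_Gp n (n - 1) hlt
  rw [← hc] at hχ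
  have h1 : (Y * c ^ q) * (Y * c ^ q) = c ^ (q - p) := by
    have h2 : Y * (c ^ p * Y * c ^ q) = 1 := by rw [heq]; simp
    have h3 : c ^ p * (Y * c ^ q * Y) = 1 := by
      rw [← mul_assoc, ← mul_assoc, heq]; simp
    have h4 : Y * c ^ q * Y = c ^ (-p) := by rw [zpow_neg]; exact (inv_eq_of_mul_eq_one_right h3).symm
    rw [← mul_assoc, h4, ← zpow_add]; congr 1; ring
  have h2 : q - p = 2 * Multiplicative.toAdd (χ (Y * c ^ q)) := by
    have := congrArg (fun a => Multiplicative.toAdd (χ a)) h1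
    simp only [map_zpow χ c (q - p), map_mul χ (Y * c ^ q), hχ, toAdd_zpow, toAdd_ofAdd,
      toAdd_mul] at this
    simp only [smul_eq_mul, mul_one] at this
    omega
  obtain ⟨l, hl⟩ : ∃ l, q - p = l + l := ⟨_, h2.trans (two_mul _)⟩
  rw [hl, zpow_add] at h1
  have h3 := sqrt_Gp n _ _ h1
  refine hYc (l - q) ?_
  rw [zpow_sub, ← h3]; group
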